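/- arXiv:1909.09840 — 3 statements merged into one kernel-verified Lean document; each statement's English description precedes it below -/
import Mathlib

section
/- For every h ∈ (−1/4, 0), writing s = h + 1/4 ∈ (0, 1/4), the following convergent series expansions hold: I₀(h) = π√2·( s + Σ_{k=2}^∞ [ (4k−5)!! / (4^{k−1}·(k−1)!·k!) ]·s^k ) and I₂(h) = π√2·( s − Σ_{k=2}^∞ [ (4k−7)!! / (4^{k−1}·(k−1)!·k!) ]·s^k ), where n!! denotes the double factorial. -/
/-!
With `s = h + 1/4` and `a = √(1 + 4h) = 2√s < 1`, the integrand satisfies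
`2h + x² - x⁴/2 = 2s - (x² - 1)²/2`, so the substitution `x² = 1 + a sin θ` gives (`AbI_eq`)
`I_k(h) = 2√2 s ∫_{-π/2}^{π/2} cos²θ (1 + a sin θ)^((k-1)/2) dθ`.
The binomial series converges uniformly in `θ` because `|a sin θ| ≤ a < 1`, hence can be
integrated term by term (`hasSum_even`). The moments `∫ cos²θ sinⁿθ dθ` vanish for odd `n` and obey
a first-order recursion in steps of two (`J_rec`); combined with the recursion of the generalized
binomial coefficients this yields `term_rec`, which the double-factorial coefficients
of both series satisfy too (`coeff_zero`, `coeff_two`).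
-/

open Set

/-- Lower endpoint of the oval projection: `x₋(h) = √(1 − √(1+4h))`. -/
noncomputable def xminus (h : ℝ) : ℝ := Real.sqrt (1 - Real.sqrt (1 + 4*h))

/-- Upper endpoint of the oval projection: `x₊(h) = √(1 + √(1+4h))`. -/
noncomputable def xplus (h : ℝ) : ℝ := Real.sqrt (1 + Real.sqrt (1 + 4*h))

/-- The Abelian integral `I_k(h) = 2∫_{x₋(h)}^{x₊(h)} x^k √(2h + x² − x⁴/2) dx`. -/
noncomputable def AbI (k : ℕ) (h : ℝ) : ℝ :=
  2 * ∫ x in (xminus h)..(xplus h), x ^ k * Real.sqrt (2*h + x^2 - x^4/2)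

/-- The trigonometric moments `J n = ∫_{-π/2}^{π/2} cos²θ sinⁿθ dθ`. -/
noncomputable def J (n : ℕ) : ℝ :=
  ∫ t in (-(Real.pi/2))..(Real.pi/2), Real.cos t ^ 2 * Real.sin t ^ n

lemma J_zero : J 0 = Real.pi / 2 := by
  simp [J, integral_cos_sq]

lemma J_one : J 1 = 0 := by
  have h : ∀ t ∈ uIcc (-(Real.pi/2)) (Real.pi/2),
      HasDerivAt (fun t => -(Real.cos t ^ 3) / 3) (Real.cos t ^ 2 * Real.sin t ^ 1) t := by
    intro t _
    have := (((Real.hasDerivAt_cos t).pow 3).neg).div_const 3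
    convert! this using 1
    simp
    ring
  rw [J, intervalIntegral.integral_eq_sub_of_hasDerivAt h
    (Continuous.intervalIntegrable (by fun_prop) _ _)]
  simp

/-- The recursion obtained by integrating the derivative of `sinⁿ⁺¹θ cos³θ`, whose boundary
values vanish. -/
lemma J_rec (n : ℕ) : ((n:ℝ) + 4) * J (n+2) = ((n:ℝ) + 1) * J n := by
  have h : ∀ t ∈ uIcc (-(Real.pi/2)) (Real.pi/2),
      HasDerivAt (fun t => Real.sin t ^ (n+1) * Real.cos t ^ 3)
        (((n:ℝ)+1) * (Real.cos t ^ 2 * Real.sin t ^ n)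
          - ((n:ℝ)+4) * (Real.cos t ^ 2 * Real.sin t ^ (n+2))) t := by
    intro t _
    have := ((Real.hasDerivAt_sin t).pow (n+1)).mul ((Real.hasDerivAt_cos t).pow 3)
    convert! this using 1
    have e : Real.cos t ^ 4 = Real.cos t ^ 2 * (1 - Real.sin t ^ 2) := by
      rw [← Real.cos_sq']; ring
    simp
    linear_combination (-((n:ℝ)+1) * Real.sin t ^ n) * e
  have i := intervalIntegral.integral_eq_sub_of_hasDerivAt h
    (Continuous.intervalIntegrable (by fun_prop) _ _)
  rw [intervalIntegral.integral_sub (Continuous.intervalIntegrable (by fun_prop) _ _)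
    (Continuous.intervalIntegrable (by fun_prop) _ _), intervalIntegral.integral_const_mul,
    intervalIntegral.integral_const_mul] at i
  simp only [Real.cos_neg, Real.cos_pi_div_two] at i
  simp only [J]
  linear_combination -i

lemma J_odd (j : ℕ) : J (2*j+1) = 0 := by
  induction j with
  | zero => simpa using J_one
  | succ j ih =>
    have := J_rec (2*j+1)
    rw [ih, mul_zero] at this
    rcases mul_eq_zero.1 this with h | h
    · exact absurd h (by positivity)
    · exact h

/-- Absorption identity for generalized binomial coefficients. -/
lemma choose_rec (r : ℝ) (n : ℕ) :
    ((n:ℝ)+1) * Ring.choose r (n+1) = (r - n) * Ring.choose r n := by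
  have := Ring.choose_smul_choose r (Nat.le_succ n)
  simp at this
  linear_combination this

/-- Termwise integration of the binomial series of `(1 + a sin θ)^r`; the odd moments vanish,
so only even powers of `a` survive. -/
lemma hasSum_even (r a : ℝ) (ha : |a| < 1) :
    HasSum (fun j : ℕ => Ring.choose r (2*j) * a^(2*j) * J (2*j))
      (∫ t in (-(Real.pi/2))..(Real.pi/2), Real.cos t ^ 2 * (1 + a * Real.sin t) ^ r) := by
  have hb := Real.one_add_rpow_hasFPowerSeriesOnBall_zero (a := r)
  have mem : ∀ x : ℝ, |x| < 1 → x ∈ Metric.eball (0:ℝ) 1 := by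
    intro x hx
    rw [← ENNReal.ofReal_one, Metric.eball_ofReal]
    simpa using hx
  have hs : ∀ x : ℝ, |x| < 1 → HasSum (fun n => Ring.choose r n * x ^ n) ((1 + x) ^ r) := by
    intro x hx
    have := hb.hasSum (mem x hx)
    simpa [binomialSeries, FormalMultilinearSeries.coeff_ofScalars, mul_comm] using this
  have hn : Summable fun n => |Ring.choose r n| * |a| ^ n := by
    have := (binomialSeries ℝ r).summable_norm_apply (x := a)
      (Metric.eball_subset_eball hb.r_le (mem a ha))
    simpa [binomialSeries, FormalMultilinearSeries.coeff_ofScalars, mul_comm] using this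
  have habs : ∀ t, |a * Real.sin t| ≤ |a| := fun t => by
    rw [abs_mul]; exact mul_le_of_le_one_right (abs_nonneg _) (Real.abs_sin_le_one t)
  have key : HasSum (fun n : ℕ => ∫ t in (-(Real.pi/2))..(Real.pi/2),
        Real.cos t ^ 2 * (Ring.choose r n * (a * Real.sin t) ^ n))
      (∫ t in (-(Real.pi/2))..(Real.pi/2), Real.cos t ^ 2 * (1 + a * Real.sin t) ^ r) := by
    refine intervalIntegral.hasSum_integral_of_dominated_convergence
      (fun n _ => |Ring.choose r n| * |a| ^ n) ?_ ?_ ?_ ?_ ?_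
    · intro n
      exact Continuous.aestronglyMeasurable (by fun_prop)
    · intro n
      refine Filter.Eventually.of_forall fun t _ => ?_
      rw [Real.norm_eq_abs, abs_mul, abs_mul, abs_pow (a * Real.sin t)]
      have h1 : |Real.cos t ^ 2| ≤ 1 := by
        rw [abs_pow]; exact pow_le_one₀ (abs_nonneg _) (Real.abs_cos_le_one t)
      calc _ ≤ 1 * (|Ring.choose r n| * |a * Real.sin t| ^ n) := by gcongr
        _ ≤ _ := by
          rw [one_mul]
          exact mul_le_mul_of_nonneg_left (pow_le_pow_left₀ (abs_nonneg _) (habs t) n)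
            (abs_nonneg _)
    · exact Filter.Eventually.of_forall fun t _ => hn
    · exact intervalIntegrable_const
    · refine Filter.Eventually.of_forall fun t _ => ?_
      exact (hs _ ((habs t).trans_lt ha)).mul_left _
  have e : ∀ n : ℕ, (∫ t in (-(Real.pi/2))..(Real.pi/2),
      Real.cos t ^ 2 * (Ring.choose r n * (a * Real.sin t) ^ n))
      = Ring.choose r n * a ^ n * J n := by
    intro n
    rw [J, ← intervalIntegral.integral_const_mul]
    congr 1
    ext t
    ring
  simp only [e] at key
  refine (Function.Injective.hasSum_iff (f := fun n : ℕ => Ring.choose r n * a ^ n * J n)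
    (g := fun j : ℕ => 2 * j) (fun x y h => by simpa using h) ?_).2 key
  intro n hn
  obtain ⟨j, rfl | rfl⟩ := n.even_or_odd'
  · exact absurd ⟨j, rfl⟩ hn
  · simp [J_odd]

/-- The substitution `x = √(1 + a sin θ)` with `a = √(1 + 4h)`, under which
`2h + x² - x⁴/2 = (a² / 2) cos²θ`. -/
lemma AbI_eq (k : ℕ) (h : ℝ) (hh : h ∈ Set.Ioo (-(1:ℝ)/4) 0) :
    AbI k h = 2 * Real.sqrt 2 * (h + 1/4) * ∫ t in (-(Real.pi/2))..(Real.pi/2),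
      Real.cos t ^ 2 * (1 + Real.sqrt (1 + 4*h) * Real.sin t) ^ (((k:ℝ) - 1)/2) := by
  obtain ⟨h1, h2⟩ := hh
  set a := Real.sqrt (1 + 4*h) with ha
  have ha0 : 0 ≤ a := Real.sqrt_nonneg _
  have hasq : a ^ 2 = 1 + 4*h := Real.sq_sqrt (by linarith)
  have ha1 : a < 1 := by nlinarith
  have pos : ∀ t, 0 < 1 + a * Real.sin t := fun t => by
    nlinarith [Real.neg_one_le_sin t, Real.sin_le_one t]
  have cov := intervalIntegral.integral_comp_mul_deriv (a := -(Real.pi/2)) (b := Real.pi/2)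
    (f := fun t => Real.sqrt (1 + a * Real.sin t))
    (f' := fun t => a * Real.cos t / (2 * Real.sqrt (1 + a * Real.sin t)))
    (g := fun x => x ^ k * Real.sqrt (2*h + x^2 - x^4/2))
    (fun t _ => (((Real.hasDerivAt_sin t).const_mul a).const_add 1).sqrt (pos t).ne')
    (Continuous.continuousOn (Continuous.div (by fun_prop) (by fun_prop)
      (fun t => by have := Real.sqrt_pos.2 (pos t); positivity)))
    (by fun_prop)
  simp only [Real.sin_neg, Real.sin_pi_div_two, mul_neg, mul_one, ← sub_eq_add_neg] at cov
  rw [AbI, xminus, xplus, ← ha, ← cov, mul_assoc (2 * Real.sqrt 2), mul_assoc 2]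
  congr 1
  rw [← mul_assoc, ← intervalIntegral.integral_const_mul]
  refine intervalIntegral.integral_congr fun t ht => ?_
  have hpi := Real.pi_pos
  rw [uIcc_of_le (by linarith)] at ht
  have hc : 0 ≤ Real.cos t := Real.cos_nonneg_of_mem_Icc ht
  set u := 1 + a * Real.sin t with hu
  have hupos : 0 < u := pos t
  have hsq : Real.sqrt u ^ 2 = u := Real.sq_sqrt hupos.le
  -- Nonnegativity of `cos t` on the interval selects the right sign of the square root.
  have hy : Real.sqrt (2*h + Real.sqrt u ^ 2 - Real.sqrt u ^ 4 / 2)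
      = a * Real.cos t * Real.sqrt 2 / 2 := by
    have h2' : Real.sqrt 2 ^ 2 = 2 := Real.sq_sqrt (by norm_num)
    rw [show Real.sqrt u ^ 4 = (Real.sqrt u ^ 2) ^ 2 by ring, hsq]
    rw [← Real.sqrt_sq (show 0 ≤ a * Real.cos t * Real.sqrt 2 / 2 by positivity)]
    congr 1
    have hcs := Real.cos_sq' t
    rw [hu]
    linear_combination (-(a ^ 2 * Real.cos t ^ 2) / 4) * h2' - (a ^ 2 / 2) * hcs - hasq / 2
  have hpow : u ^ (((k:ℝ) - 1)/2) = Real.sqrt u ^ k / Real.sqrt u := by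
    rw [sub_div, Real.rpow_sub hupos, ← Real.sqrt_eq_rpow, Real.sqrt_eq_rpow,
      ← Real.rpow_natCast, ← Real.rpow_mul hupos.le]
    ring_nf
  have hsu : Real.sqrt u ≠ 0 := (Real.sqrt_pos.2 hupos).ne'
  simp only [Function.comp]
  rw [← hu, hy, hpow]
  field_simp
  linear_combination (4 * Real.cos t ^ 2) * hasq

/-- The ratio of consecutive even-index terms in the termwise integrated binomial series. -/
lemma term_rec (r : ℝ) (j : ℕ) :
    ((2*j:ℝ)+2) * (2*j+4) * (Ring.choose r (2*(j+1)) * J (2*(j+1)))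
      = (r - 2*j) * (r - 2*j - 1) * (Ring.choose r (2*j) * J (2*j)) := by
  have c1 := choose_rec r (2*j)
  have c2 := choose_rec r (2*j+1)
  have j2 := J_rec (2*j)
  rw [show 2*(j+1) = 2*j+1+1 by ring]
  push_cast at c1 c2 j2 ⊢
  have hj : (2*j+1 : ℝ) ≠ 0 := by positivity
  apply mul_left_cancel₀ hj
  linear_combination (2*j+1:ℝ) * (2*j+4) * J (2*j+2) * c2
    + (r - (2*j+1)) * (2*j+4) * J (2*j+2) * c1
    + (r - 2*j) * (r - (2*j+1)) * Ring.choose r (2*j) * j2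

/-- The coefficients of the `I₀` series. With exponent `-1/2`, `term_rec` multiplies the `j`-th
term by `(4j+1)(4j+3) / (16(j+1)(j+2))`, which advances the double factorial by two steps. -/
lemma coeff_zero (k : ℕ) :
    2 * 4^(k+1) * (Ring.choose (((0:ℕ) - 1)/2 : ℝ) (2*(k+1)) * J (2*(k+1)))
    = Real.pi * (((4*(k+2)-5).doubleFactorial : ℝ) /
          (4^(k+1) * ((k+1).factorial : ℝ) * ((k+2).factorial : ℝ))) := by
  induction k with
  | zero =>
    have c := term_rec (((0:ℕ) - 1)/2 : ℝ) 0
    norm_num [J_zero, Nat.doubleFactorial, Nat.factorial] at c ⊢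
    linear_combination c
  | succ k ih =>
    have c := term_rec (((0:ℕ) - 1)/2 : ℝ) (k+1)
    rw [show 4*(k+2)-5 = 4*k+3 by omega] at ih
    rw [show 4*(k+1+2)-5 = 4*k+3+2+2 by omega, Nat.doubleFactorial_add_two,
      Nat.doubleFactorial_add_two, Nat.factorial_succ (k+2), Nat.factorial_succ (k+1)]
    rw [Nat.factorial_succ (k+1)] at ih
    set T := Ring.choose (((0:ℕ) - 1)/2 : ℝ) (2*(k+1)) * J (2*(k+1))
    set U := Ring.choose (((0:ℕ) - 1)/2 : ℝ) (2*(k+1+1)) * J (2*(k+1+1))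
    -- Clear denominators in the induction hypothesis and the goal.
    rw [eq_comm, mul_div_assoc', div_eq_iff (by positivity), eq_comm] at ih ⊢
    push_cast at c ih ⊢
    rw [pow_succ 4 (k+1)]
    linear_combination ((4*k+5:ℝ) * (4*k+7)) * ih
      + 8 * ((4:ℝ)^(k+1))^2 * (k+2) * (k+1).factorial * (k+1).factorial * c

/-- The coefficients of the `I₂` series: for the exponent `1/2` the factor in `term_rec` becomes
`(4j-1)(4j+1) / (16(j+1)(j+2))`, which is negative only for `j = 0`, whence the common sign. -/
lemma coeff_two (k : ℕ) :
    2 * 4^(k+1) * (Ring.choose (((2:ℕ) - 1)/2 : ℝ) (2*(k+1)) * J (2*(k+1)))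
    = -(Real.pi * (((4*(k+2)-7).doubleFactorial : ℝ) /
          (4^(k+1) * ((k+1).factorial : ℝ) * ((k+2).factorial : ℝ)))) := by
  induction k with
  | zero =>
    have c := term_rec (((2:ℕ) - 1)/2 : ℝ) 0
    norm_num [J_zero, Nat.doubleFactorial, Nat.factorial] at c ⊢
    linear_combination c
  | succ k ih =>
    have c := term_rec (((2:ℕ) - 1)/2 : ℝ) (k+1)
    rw [show 4*(k+2)-7 = 4*k+1 by omega] at ih
    rw [show 4*(k+1+2)-7 = 4*k+1+2+2 by omega, Nat.doubleFactorial_add_two,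
      Nat.doubleFactorial_add_two, Nat.factorial_succ (k+2), Nat.factorial_succ (k+1)]
    rw [Nat.factorial_succ (k+1)] at ih
    set T := Ring.choose (((2:ℕ) - 1)/2 : ℝ) (2*(k+1)) * J (2*(k+1))
    set U := Ring.choose (((2:ℕ) - 1)/2 : ℝ) (2*(k+1+1)) * J (2*(k+1+1))
    -- Clear denominators in the induction hypothesis and the goal.
    rw [eq_comm, mul_div_assoc', ← neg_div, div_eq_iff (by positivity), eq_comm] at ih ⊢
    push_cast at c ih ⊢
    rw [pow_succ 4 (k+1)]
    linear_combination ((4*k+3:ℝ) * (4*k+5)) * ih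
      + 8 * ((4:ℝ)^(k+1))^2 * (k+2) * (k+1).factorial * (k+1).factorial * c

/-- The power series of `AbI m` in `s = h + 1/4` with its leading term removed. That term is
`π√2 s` for every `m`, since it comes from `J 0 = π/2` alone. -/
lemma AbI_hasSum (m : ℕ) (h : ℝ) (hh : h ∈ Set.Ioo (-(1:ℝ)/4) 0) :
    HasSum (fun k : ℕ => Real.sqrt 2 *
        (2 * 4^(k+1) * (Ring.choose (((m:ℝ) - 1)/2) (2*(k+1)) * J (2*(k+1)))) * (h + 1/4)^(k+2))
      (AbI m h - Real.pi * Real.sqrt 2 * (h + 1/4)) := by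
  have h1 : 0 ≤ 1 + 4*h := by have := hh.1; linarith
  have ha : |Real.sqrt (1 + 4*h)| < 1 := by
    rw [abs_of_nonneg (Real.sqrt_nonneg _), Real.sqrt_lt' one_pos]
    have := hh.2; linarith
  have H := (hasSum_even (((m:ℝ) - 1)/2) _ ha).mul_left (2 * Real.sqrt 2 * (h + 1/4))
  rw [← AbI_eq m h hh] at H
  have H' := (hasSum_nat_add_iff' 1).2 H
  convert! H' using 1
  · ext k
    rw [pow_mul, Real.sq_sqrt h1, show 1 + 4*h = 4 * (h + 1/4) by ring, mul_pow]
    ring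
  · simp [J_zero]
    ring

/-- Convergent series expansions of `I₀` and `I₂` at `s = h + 1/4`:
`I₀ = π√2(s + Σ_{k≥2} (4k−5)!!/(4^{k−1}(k−1)!k!) s^k)` and
`I₂ = π√2(s − Σ_{k≥2} (4k−7)!!/(4^{k−1}(k−1)!k!) s^k)`
(the summation index below is shifted: `k ↦ k + 2`). -/
theorem series_expansions : ∀ h ∈ Set.Ioo (-(1:ℝ)/4) 0,
    HasSum (fun k : ℕ => Real.pi * Real.sqrt 2 *
        (((4*(k+2)-5).doubleFactorial : ℝ) /
          (4^(k+1) * ((k+1).factorial : ℝ) * ((k+2).factorial : ℝ))) * (h + 1/4)^(k+2))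
      (AbI 0 h - Real.pi * Real.sqrt 2 * (h + 1/4)) ∧
    HasSum (fun k : ℕ => -(Real.pi * Real.sqrt 2 *
        (((4*(k+2)-7).doubleFactorial : ℝ) /
          (4^(k+1) * ((k+1).factorial : ℝ) * ((k+2).factorial : ℝ))) * (h + 1/4)^(k+2)))
      (AbI 2 h - Real.pi * Real.sqrt 2 * (h + 1/4)) := by
  intro h hh
  constructor
  · convert! AbI_hasSum 0 h hh using 2 with k
    rw [coeff_zero]
    ring
  · convert! AbI_hasSum 2 h hh using 2 with k
    rw [coeff_two]
    ring
end

section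
/- For every h ∈ (−1/4, 0) the following derived Picard–Fuchs identities hold (note h·(4h+1) ≠ 0 there): h(4h+1)·I₀'(h) = (3h+1)·I₀(h) − (5/4)·I₂(h) and h(4h+1)·I₂'(h) = −h·I₀(h) + 5h·I₂(h); h(4h+1)·I₀''(h) = −h·I₀'(h) − (1/4)·I₂'(h) and h(4h+1)·I₂''(h) = −h·I₀'(h) + h·I₂'(h); h(4h+1)·I₀'''(h) = −(5h+1)·I₀''(h) + (3/4)·I₂''(h) and h(4h+1)·I₂'''(h) = −h·I₀''(h) − 3h·I₂''(h); h(4h+1)·I₀''''(h) = −(9h+2)·I₀'''(h) + (7/4)·I₂'''(h) and h(4h+1)·I₂''''(h) = −h·I₀'''(h) − 7h·I₂'''(h). -/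
/-!
With `s = √(1+4h)`, the quantity under the root is `2h + x² − x⁴/2 = (s² − (x² − 1)²) / 2`, so the
substitution `x² = 1 + s sin θ` gives `I_k(h) = s²/√2 · J_{(k-1)/2}(s)`, where
`J_a(s) = ∫_{-π/2}^{π/2} (1 + s sin θ)^a cos² θ dθ` has a fixed domain and an integrand smooth in
`s ∈ (-1, 1)` (`AbI_eq_ovalJ`). Two facts about `J` give the Picard–Fuchs system
(`hasDerivAt_AbI`):

* differentiation under the integral sign gives `s J_a' = a (J_a − J_{a-1})` (`hasDerivAt_ovalJ`);
* integrating the derivative of `(1 + s sin θ)^(-1/2) cos³ θ` gives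
  `(s² − 1) J_{-3/2} = 4 J_{-1/2} − 5 J_{1/2}` (`ovalJ_contiguity`).

The higher identities are algebraic consequences. Differentiating the system of one level
(`linear_ode_step`) leaves terms two orders below the new derivative; the system of the previous
level, solved for them by means of `h (4h+1) ≠ 0`, brings the result to the stated form.
-/

open Set

/-! ### The integrals on a fixed domain -/

/-- `J a s = ∫_{-π/2}^{π/2} (1 + s sin θ)^a cos² θ dθ`. The substitution `x² = 1 + s sin θ`,
`s = √(1+4h)`, turns `I_k(h)` into `s² / √2 * J ((k-1)/2) s`: the domain no longer depends on the
parameter, and the integrand is smooth in `s` for `|s| < 1`. -/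
noncomputable def ovalJ (a s : ℝ) : ℝ :=
  ∫ θ in (-(Real.pi / 2))..(Real.pi / 2), (1 + s * Real.sin θ) ^ a * Real.cos θ ^ 2

lemma one_add_mul_sin_pos {s : ℝ} (hs : |s| < 1) (θ : ℝ) : 0 < 1 + s * Real.sin θ := by
  have h1 : |s * Real.sin θ| < 1 := by
    rw [abs_mul]
    exact (mul_le_of_le_one_right (abs_nonneg s) (Real.abs_sin_le_one θ)).trans_lt hs
  linarith [(abs_lt.1 h1).1]

lemma continuous_one_add_mul_sin_rpow {s : ℝ} (hs : |s| < 1) (a : ℝ) :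
    Continuous fun θ : ℝ => (1 + s * Real.sin θ) ^ a :=
  (by fun_prop : Continuous fun θ : ℝ => 1 + s * Real.sin θ).rpow_const
    fun θ => Or.inl (one_add_mul_sin_pos hs θ).ne'

lemma intervalIntegrable_ovalJ {s : ℝ} (hs : |s| < 1) (a p q : ℝ) :
    IntervalIntegrable (fun θ => (1 + s * Real.sin θ) ^ a * Real.cos θ ^ 2)
      MeasureTheory.volume p q := by
  have := continuous_one_add_mul_sin_rpow hs a
  exact (by fun_prop : Continuous _).intervalIntegrable _ _

lemma hasDerivAt_ovalJ_integral {s : ℝ} (hs : |s| < 1) (a : ℝ) :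
    HasDerivAt (ovalJ a)
      (∫ θ in (-(Real.pi / 2))..(Real.pi / 2),
        a * Real.sin θ * (1 + s * Real.sin θ) ^ (a - 1) * Real.cos θ ^ 2) s := by
  obtain ⟨r, hsr, hr⟩ := exists_between hs
  have habs : ∀ x ∈ Icc (-r) r, |x| < 1 := fun x hx => (abs_le.2 hx).trans_lt hr
  -- A constant dominates the `s`-derivative, by compactness of `[-r, r] × [-π/2, π/2]`.
  have hcont : ContinuousOn (fun p : ℝ × ℝ =>
      a * Real.sin p.2 * (1 + p.1 * Real.sin p.2) ^ (a - 1) * Real.cos p.2 ^ 2)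
      (Icc (-r) r ×ˢ Icc (-(Real.pi / 2)) (Real.pi / 2)) := by
    refine ContinuousOn.mul (ContinuousOn.mul (by fun_prop) ?_) (by fun_prop)
    exact ContinuousOn.rpow_const (by fun_prop)
      fun p hp => Or.inl (one_add_mul_sin_pos (habs _ hp.1) _).ne'
  obtain ⟨C, hC⟩ := (isCompact_Icc.prod isCompact_Icc).exists_bound_of_continuousOn hcont
  have hpi : -(Real.pi / 2) ≤ Real.pi / 2 := by linarith [Real.pi_pos]
  have hnhds : Ioo (-r) r ∈ nhds s := Ioo_mem_nhds (abs_lt.1 hsr).1 (abs_lt.1 hsr).2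
  refine (intervalIntegral.hasDerivAt_integral_of_dominated_loc_of_deriv_le
    (F := fun x θ => (1 + x * Real.sin θ) ^ a * Real.cos θ ^ 2)
    (F' := fun x θ => a * Real.sin θ * (1 + x * Real.sin θ) ^ (a - 1) * Real.cos θ ^ 2)
    (bound := fun _ => C) hnhds ?_ (intervalIntegrable_ovalJ hs a _ _) ?_ ?_
    intervalIntegrable_const ?_).2
  · filter_upwards [hnhds] with x hx
    have := continuous_one_add_mul_sin_rpow (habs x (Ioo_subset_Icc_self hx)) a
    exact (by fun_prop : Continuous _).aestronglyMeasurable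
  · have := continuous_one_add_mul_sin_rpow hs (a - 1)
    exact (by fun_prop : Continuous _).aestronglyMeasurable
  · refine Filter.Eventually.of_forall fun θ hθ x hx => ?_
    rw [uIoc_of_le hpi] at hθ
    exact hC (x, θ) ⟨Ioo_subset_Icc_self hx, Ioc_subset_Icc_self hθ⟩
  · refine Filter.Eventually.of_forall fun θ _ x hx => ?_
    have hpos := one_add_mul_sin_pos (habs x (Ioo_subset_Icc_self hx)) θ
    have h1 : HasDerivAt (fun x : ℝ => 1 + x * Real.sin θ) (Real.sin θ) x := by
      simpa using ((hasDerivAt_id x).mul_const (Real.sin θ)).const_add 1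
    have h2 := (h1.rpow_const (p := a) (Or.inl hpos.ne')).mul_const (Real.cos θ ^ 2)
    exact h2.congr_deriv (by ring)

/-- Since `s sin θ = (1 + s sin θ) - 1`, differentiation in `s` only shifts the exponent. -/
lemma hasDerivAt_ovalJ {s : ℝ} (hs : |s| < 1) (hs0 : s ≠ 0) (a : ℝ) :
    HasDerivAt (ovalJ a) (a * (ovalJ a s - ovalJ (a - 1) s) / s) s := by
  refine (hasDerivAt_ovalJ_integral hs a).congr_deriv ?_
  rw [eq_div_iff hs0, ovalJ, ovalJ, ← intervalIntegral.integral_sub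
    (intervalIntegrable_ovalJ hs a _ _) (intervalIntegrable_ovalJ hs (a - 1) _ _),
    ← intervalIntegral.integral_const_mul, ← intervalIntegral.integral_mul_const]
  refine intervalIntegral.integral_congr fun θ _ => ?_
  have hpos := one_add_mul_sin_pos hs θ
  have h1 : (1 + s * Real.sin θ) ^ a
      = (1 + s * Real.sin θ) ^ (a - 1) * (1 + s * Real.sin θ) := by
    rw [← Real.rpow_add_one hpos.ne']; ring_nf
  simp only [h1]
  ring

/-- The contiguity relation between three consecutive exponents, obtained by integrating the
derivative of `(1 + s sin θ)^(-1/2) cos³ θ`, which vanishes at `±π/2`. -/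
lemma ovalJ_contiguity {s : ℝ} (hs : |s| < 1) :
    (s ^ 2 - 1) * ovalJ (-1 / 2 - 1) s = 4 * ovalJ (-1 / 2) s - 5 * ovalJ (1 / 2) s := by
  have i1 := intervalIntegrable_ovalJ hs (-1 / 2 - 1) (-(Real.pi / 2)) (Real.pi / 2)
  have i2 := intervalIntegrable_ovalJ hs (-1 / 2) (-(Real.pi / 2)) (Real.pi / 2)
  have i3 := intervalIntegrable_ovalJ hs (1 / 2) (-(Real.pi / 2)) (Real.pi / 2)
  have hder : ∀ θ ∈ uIcc (-(Real.pi / 2)) (Real.pi / 2),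
      HasDerivAt (fun θ : ℝ => -2 * s * ((1 + s * Real.sin θ) ^ (-1 / 2 : ℝ) * Real.cos θ ^ 3))
        ((s ^ 2 - 1) * ((1 + s * Real.sin θ) ^ (-1 / 2 - 1 : ℝ) * Real.cos θ ^ 2)
          - (4 * ((1 + s * Real.sin θ) ^ (-1 / 2 : ℝ) * Real.cos θ ^ 2)
          - 5 * ((1 + s * Real.sin θ) ^ (1 / 2 : ℝ) * Real.cos θ ^ 2))) θ := by
    intro θ _
    have hpos := one_add_mul_sin_pos hs θ
    have h1 : HasDerivAt (fun θ : ℝ => 1 + s * Real.sin θ) (s * Real.cos θ) θ :=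
      ((Real.hasDerivAt_sin θ).const_mul s).const_add 1
    have h2 := ((h1.rpow_const (p := -1 / 2) (Or.inl hpos.ne')).mul
      ((Real.hasDerivAt_cos θ).pow 3)).const_mul (-2 * s)
    refine h2.congr_deriv ?_
    have e1 : (1 + s * Real.sin θ) ^ (-1 / 2 : ℝ)
        = (1 + s * Real.sin θ) ^ (-1 / 2 - 1 : ℝ) * (1 + s * Real.sin θ) := by
      rw [← Real.rpow_add_one hpos.ne']; norm_num
    have e2 : (1 + s * Real.sin θ) ^ (1 / 2 : ℝ)
        = (1 + s * Real.sin θ) ^ (-1 / 2 - 1 : ℝ) * (1 + s * Real.sin θ)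
          * (1 + s * Real.sin θ) := by
      rw [← Real.rpow_add_one hpos.ne', ← Real.rpow_add_one hpos.ne']; norm_num
    simp only [e2, e1, Pi.pow_apply]
    push_cast
    set v := (1 + s * Real.sin θ) ^ (-1 / 2 - 1 : ℝ)
    linear_combination (s ^ 2 * v * Real.cos θ ^ 2) * Real.sin_sq_add_cos_sq θ
  have key := intervalIntegral.integral_eq_sub_of_hasDerivAt hder
    ((i1.const_mul _).sub ((i2.const_mul _).sub (i3.const_mul _)))
  rw [intervalIntegral.integral_sub (i1.const_mul _) ((i2.const_mul _).sub (i3.const_mul _)),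
    intervalIntegral.integral_sub (i2.const_mul _) (i3.const_mul _)] at key
  simp only [intervalIntegral.integral_const_mul, Real.cos_neg, Real.cos_pi_div_two] at key
  simp only [ovalJ]
  linear_combination key

/-! ### The Picard–Fuchs system -/

lemma sqrt_oval_mem {h : ℝ} (hh : h ∈ Ioo (-(1:ℝ)/4) 0) :
    0 < √(1 + 4 * h) ∧ |√(1 + 4 * h)| < 1 ∧ √(1 + 4 * h) ^ 2 = 1 + 4 * h := by
  obtain ⟨h1, h2⟩ := hh
  have hp : 0 < 1 + 4 * h := by linarith
  refine ⟨Real.sqrt_pos.2 hp, ?_, Real.sq_sqrt hp.le⟩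
  rw [abs_of_nonneg (Real.sqrt_nonneg _), Real.sqrt_lt' one_pos]
  linarith

lemma AbI_eq_ovalJ {h : ℝ} (hh : h ∈ Ioo (-(1:ℝ)/4) 0) (k : ℕ) :
    AbI k h = (1 + 4 * h) / √2 * ovalJ (((k : ℝ) - 1) / 2) (√(1 + 4 * h)) := by
  obtain ⟨hs0, hs, hsq⟩ := sqrt_oval_mem hh
  set s := √(1 + 4 * h) with hsdef
  have hder : ∀ θ ∈ uIcc (-(Real.pi / 2)) (Real.pi / 2),
      HasDerivAt (fun θ : ℝ => √(1 + s * Real.sin θ))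
        (s * Real.cos θ / (2 * √(1 + s * Real.sin θ))) θ := by
    intro θ _
    exact (((Real.hasDerivAt_sin θ).const_mul s).const_add 1).sqrt
      (one_add_mul_sin_pos hs θ).ne'
  have hsub := intervalIntegral.integral_comp_mul_deriv hder
    (by
      refine Continuous.continuousOn (Continuous.div (by fun_prop) (by fun_prop) fun θ => ?_)
      exact mul_ne_zero two_ne_zero (Real.sqrt_pos.2 (one_add_mul_sin_pos hs θ)).ne')
    (g := fun x => x ^ k * √(2 * h + x ^ 2 - x ^ 4 / 2)) (by fun_prop)
  have hm : √(1 + s * Real.sin (-(Real.pi / 2))) = xminus h := by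
    simp [xminus, ← hsdef, sub_eq_add_neg]
  have hp : √(1 + s * Real.sin (Real.pi / 2)) = xplus h := by simp [xplus, ← hsdef]
  rw [hm, hp] at hsub
  rw [AbI, ← hsub, ovalJ, ← intervalIntegral.integral_const_mul,
    ← intervalIntegral.integral_const_mul]
  refine intervalIntegral.integral_congr fun θ hθ => ?_
  rw [uIcc_of_le (by linarith [Real.pi_pos])] at hθ
  have hcos := Real.cos_nonneg_of_mem_Icc hθ
  have hpos := one_add_mul_sin_pos hs θ
  have hu := Real.sqrt_pos.2 hpos
  have husq := Real.sq_sqrt hpos.le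
  have hy : √(2 * h + √(1 + s * Real.sin θ) ^ 2 - √(1 + s * Real.sin θ) ^ 4 / 2)
      = s * Real.cos θ / √2 := by
    have hsq2 : 2 * h + √(1 + s * Real.sin θ) ^ 2 - √(1 + s * Real.sin θ) ^ 4 / 2
        = (s * Real.cos θ / √2) ^ 2 := by
      rw [show √(1 + s * Real.sin θ) ^ 4 = (√(1 + s * Real.sin θ) ^ 2) ^ 2 by ring, husq,
        div_pow, Real.sq_sqrt zero_le_two]
      linear_combination (-1 / 2 : ℝ) * hsq - s ^ 2 / 2 * Real.sin_sq_add_cos_sq θ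
    rw [hsq2, Real.sqrt_sq (by positivity)]
  have hpow : (1 + s * Real.sin θ) ^ (((k : ℝ) - 1) / 2)
      = √(1 + s * Real.sin θ) ^ k / √(1 + s * Real.sin θ) := by
    rw [Real.sqrt_eq_rpow, ← Real.rpow_natCast, ← Real.rpow_mul hpos.le,
      ← Real.rpow_sub hpos]
    ring_nf
  simp only [Function.comp, hy, hpow]
  rw [← hsq]
  field_simp

/-- The undifferentiated Picard–Fuchs system, including the differentiability of `I₀` and `I₂`. -/
lemma hasDerivAt_AbI {h : ℝ} (hh : h ∈ Ioo (-(1:ℝ)/4) 0) :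
    HasDerivAt (AbI 0) (((3*h+1) * AbI 0 h - (5/4) * AbI 2 h) / (h * (4*h+1))) h ∧
    HasDerivAt (AbI 2) ((-h * AbI 0 h + 5*h * AbI 2 h) / (h * (4*h+1))) h := by
  obtain ⟨hs0, hs, hsq⟩ := sqrt_oval_mem hh
  have hh0 : h ≠ 0 := hh.2.ne
  have hh1 : 1 + 4 * h ≠ 0 := by linarith [hh.1]
  have hnear : Ioo (-(1:ℝ)/4) 0 ∈ nhds h := Ioo_mem_nhds hh.1 hh.2
  have hlin : HasDerivAt (fun h : ℝ => 1 + 4 * h) 4 h := by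
    simpa using ((hasDerivAt_id h).const_mul (4 : ℝ)).const_add 1
  have hchain : ∀ a : ℝ, HasDerivAt (fun h => (1 + 4 * h) / √2 * ovalJ a (√(1 + 4 * h)))
      (4 / √2 * ovalJ a (√(1 + 4 * h)) + (1 + 4 * h) / √2 *
        (a * (ovalJ a (√(1 + 4 * h)) - ovalJ (a - 1) (√(1 + 4 * h))) / √(1 + 4 * h) *
          (4 / (2 * √(1 + 4 * h))))) h := fun a =>
    (hlin.div_const _).mul (HasDerivAt.comp (h₂ := ovalJ a) (h := fun h => √(1 + 4 * h)) h
      (hasDerivAt_ovalJ hs hs0.ne' a) (hlin.sqrt hh1))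
  have e0 : ((0 : ℕ) - 1 : ℝ) / 2 = -1 / 2 := by norm_num
  have e2 : ((2 : ℕ) - 1 : ℝ) / 2 = 1 / 2 := by norm_num
  have hcontig := ovalJ_contiguity hs
  have h2 : √2 ≠ 0 := by positivity
  have alg : ∀ A B C : ℝ, (√(1 + 4 * h) ^ 2 - 1) * C = 4 * A - 5 * B →
      ((3*h+1) * ((1 + 4 * h) / √2 * A) - (5/4) * ((1 + 4 * h) / √2 * B)) / (h * (4*h+1))
        = 4 / √2 * A + (1 + 4 * h) / √2 *
          (-1 / 2 * (A - C) / √(1 + 4 * h) * (4 / (2 * √(1 + 4 * h)))) ∧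
      (-h * ((1 + 4 * h) / √2 * A) + 5*h * ((1 + 4 * h) / √2 * B)) / (h * (4*h+1))
        = 4 / √2 * B + (1 + 4 * h) / √2 *
          (1 / 2 * (B - A) / √(1 + 4 * h) * (4 / (2 * √(1 + 4 * h)))) := by
    intro A B C hC
    -- The factor `dJ/dh = J'(s) ds/dh` contributes `1/s²`, which cancels `s² = 1 + 4h`.
    have hq : ∀ x : ℝ, (1 + 4 * h) / √2 * (x / √(1 + 4 * h) * (4 / (2 * √(1 + 4 * h))))
        = 2 * x / √2 := by
      intro x
      have : x / √(1 + 4 * h) * (4 / (2 * √(1 + 4 * h))) = 2 * x / (1 + 4 * h) := by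
        rw [div_mul_div_comm, div_eq_div_iff (by positivity) hh1]
        linear_combination (-4 * x) * hsq
      rw [this]
      field_simp
    have hh1' : 4 * h + 1 ≠ 0 := by rwa [add_comm]
    rw [hsq] at hC
    rw [hq, hq, div_eq_iff (mul_ne_zero hh0 hh1'), div_eq_iff (mul_ne_zero hh0 hh1')]
    constructor
    · field_simp
      linear_combination (-(1 + 4 * h)) * hC
    · field_simp
      ring
  constructor
  · refine HasDerivAt.congr_of_eventuallyEq ?_
      (Filter.eventuallyEq_of_mem hnear fun x hx => AbI_eq_ovalJ hx 0)
    rw [AbI_eq_ovalJ hh 0, AbI_eq_ovalJ hh 2, e0, e2]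
    refine (hchain (-1 / 2)).congr_deriv ?_
    exact (alg _ _ _ hcontig).1.symm
  · refine HasDerivAt.congr_of_eventuallyEq ?_
      (Filter.eventuallyEq_of_mem hnear fun x hx => AbI_eq_ovalJ hx 2)
    rw [AbI_eq_ovalJ hh 0, AbI_eq_ovalJ hh 2, e0, e2]
    refine (hchain (1 / 2)).congr_deriv ?_
    rw [show (1 / 2 - 1 : ℝ) = -1 / 2 by norm_num]
    exact (alg _ _ _ hcontig).2.symm

/-! ### Derived identities -/

/-- Differentiating once an equation `h(4h+1) f' = (a₁h+a₀) f + (b₁h+b₀) g`; that `f'` is again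
differentiable is part of the conclusion. -/
lemma linear_ode_step {f g : ℝ → ℝ} (a₁ a₀ b₁ b₀ : ℝ)
    (hf : ∀ h ∈ Ioo (-(1:ℝ)/4) 0, DifferentiableAt ℝ f h)
    (hg : ∀ h ∈ Ioo (-(1:ℝ)/4) 0, DifferentiableAt ℝ g h)
    (hE : ∀ h ∈ Ioo (-(1:ℝ)/4) 0,
      h * (4*h+1) * deriv f h = (a₁*h+a₀) * f h + (b₁*h+b₀) * g h) :
    ∀ h ∈ Ioo (-(1:ℝ)/4) 0, DifferentiableAt ℝ (deriv f) h ∧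
      h * (4*h+1) * deriv (deriv f) h + (8*h+1) * deriv f h =
        a₁ * f h + (a₁*h+a₀) * deriv f h + b₁ * g h + (b₁*h+b₀) * deriv g h := by
  intro h hh
  have hnear : Ioo (-(1:ℝ)/4) 0 ∈ nhds h := Ioo_mem_nhds hh.1 hh.2
  have hne : ∀ x ∈ Ioo (-(1:ℝ)/4) 0, x * (4*x+1) ≠ 0 := fun x hx =>
    mul_ne_zero hx.2.ne (by linarith [hx.1])
  have hlin : ∀ c₁ c₀ : ℝ, HasDerivAt (fun x : ℝ => c₁ * x + c₀) c₁ h := fun c₁ c₀ => by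
    simpa using ((hasDerivAt_id h).const_mul c₁).add_const c₀
  have hR := ((hlin a₁ a₀).mul (hf h hh).hasDerivAt).add
    ((hlin b₁ b₀).mul (hg h hh).hasDerivAt)
  have hP := (hasDerivAt_id h).mul (hlin 4 1)
  have hd : DifferentiableAt ℝ (deriv f) h := by
    refine (hR.div hP (hne h hh)).differentiableAt.congr_of_eventuallyEq
      (Filter.eventuallyEq_of_mem hnear fun x hx => ?_)
    simp only [Pi.div_apply, Pi.mul_apply, Pi.add_apply, id]
    rw [eq_div_iff (hne x hx), ← hE x hx]
    ring
  refine ⟨hd, ?_⟩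
  have hL := (hP.mul hd.hasDerivAt).congr_of_eventuallyEq
    (Filter.eventuallyEq_of_mem hnear fun x hx => (hE x hx).symm)
  have := hL.unique hR
  simp only [Pi.mul_apply, id] at this
  linear_combination this


/-- The derived Picard–Fuchs identities for the first four derivatives of `I₀, I₂`. -/
theorem derived_picard_fuchs : ∀ h ∈ Set.Ioo (-(1:ℝ)/4) 0,
    h * (4*h+1) * deriv (AbI 0) h = (3*h+1) * AbI 0 h - (5/4) * AbI 2 h ∧
    h * (4*h+1) * deriv (AbI 2) h = -h * AbI 0 h + 5*h * AbI 2 h ∧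
    h * (4*h+1) * iteratedDeriv 2 (AbI 0) h = -h * deriv (AbI 0) h - (1/4) * deriv (AbI 2) h ∧
    h * (4*h+1) * iteratedDeriv 2 (AbI 2) h = -h * deriv (AbI 0) h + h * deriv (AbI 2) h ∧
    h * (4*h+1) * iteratedDeriv 3 (AbI 0) h =
      -(5*h+1) * iteratedDeriv 2 (AbI 0) h + (3/4) * iteratedDeriv 2 (AbI 2) h ∧
    h * (4*h+1) * iteratedDeriv 3 (AbI 2) h =
      -h * iteratedDeriv 2 (AbI 0) h - 3*h * iteratedDeriv 2 (AbI 2) h ∧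
    h * (4*h+1) * iteratedDeriv 4 (AbI 0) h =
      -(9*h+2) * iteratedDeriv 3 (AbI 0) h + (7/4) * iteratedDeriv 3 (AbI 2) h ∧
    h * (4*h+1) * iteratedDeriv 4 (AbI 2) h =
      -h * iteratedDeriv 3 (AbI 0) h - 7*h * iteratedDeriv 3 (AbI 2) h := by
  set f := AbI 0
  set g := AbI 2
  have hne0 : ∀ h ∈ Ioo (-(1:ℝ)/4) 0, h ≠ 0 := fun h hh => hh.2.ne
  have hne : ∀ h ∈ Ioo (-(1:ℝ)/4) 0, h * (4*h+1) ≠ 0 := fun h hh =>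
    mul_ne_zero (hne0 h hh) (by linarith [hh.1])
  have df : ∀ h ∈ Ioo (-(1:ℝ)/4) 0, DifferentiableAt ℝ f h := fun h hh =>
    (hasDerivAt_AbI hh).1.differentiableAt
  have dg : ∀ h ∈ Ioo (-(1:ℝ)/4) 0, DifferentiableAt ℝ g h := fun h hh =>
    (hasDerivAt_AbI hh).2.differentiableAt
  have A0 : ∀ h ∈ Ioo (-(1:ℝ)/4) 0,
      h * (4*h+1) * deriv f h = (3*h+1) * f h - (5/4) * g h := fun h hh => by
    rw [(hasDerivAt_AbI hh).1.deriv, mul_div_cancel₀ _ (hne h hh)]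
  have B0 : ∀ h ∈ Ioo (-(1:ℝ)/4) 0,
      h * (4*h+1) * deriv g h = -h * f h + 5*h * g h := fun h hh => by
    rw [(hasDerivAt_AbI hh).2.deriv, mul_div_cancel₀ _ (hne h hh)]
  -- `SAₙ`, `SBₙ` differentiate the level-`(n-1)` equations `Aₙ₋₁`, `Bₙ₋₁`. In each level-`n`
  -- equation, `K` removes the terms of order `n-1`: it is the level-`(n-1)` system solved for them.
  have SA1 := linear_ode_step 3 1 0 (-5/4) df dg
    (fun h hh => by linear_combination A0 h hh)
  have SB1 := linear_ode_step 5 0 (-1) 0 dg df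
    (fun h hh => by linear_combination B0 h hh)
  have A1 : ∀ h ∈ Ioo (-(1:ℝ)/4) 0,
      h * (4*h+1) * deriv (deriv f) h = -h * deriv f h - (1/4) * deriv g h := fun h hh => by
    have K : 3 * f h = 4*h * deriv f h + deriv g h := mul_left_cancel₀ (hne h hh) (by
      linear_combination (-4*h) * A0 h hh - B0 h hh)
    linear_combination (SA1 h hh).2 + K
  have B1 : ∀ h ∈ Ioo (-(1:ℝ)/4) 0,
      h * (4*h+1) * deriv (deriv g) h = -h * deriv f h + h * deriv g h := fun h hh => by
    have K : (4*h+1) * deriv g h = -f h + 5 * g h := mul_left_cancel₀ (hne0 h hh) (by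
      linear_combination B0 h hh)
    linear_combination (SB1 h hh).2 - K
  have SA2 := linear_ode_step (-1) 0 0 (-1/4) (fun h hh => (SA1 h hh).1) (fun h hh => (SB1 h hh).1)
    (fun h hh => by linear_combination A1 h hh)
  have SB2 := linear_ode_step 1 0 (-1) 0 (fun h hh => (SB1 h hh).1) (fun h hh => (SA1 h hh).1)
    (fun h hh => by linear_combination B1 h hh)
  have A2 : ∀ h ∈ Ioo (-(1:ℝ)/4) 0,
      h * (4*h+1) * deriv (deriv (deriv f)) h =
        -(5*h+1) * deriv (deriv f) h + (3/4) * deriv (deriv g) h := fun h hh => by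
    have K : deriv f h =
        -4*h * deriv (deriv f) h - deriv (deriv g) h :=
      mul_left_cancel₀ (hne h hh) (by
      linear_combination (4*h) * A1 h hh + B1 h hh)
    linear_combination (SA2 h hh).2 - K
  have B2 : ∀ h ∈ Ioo (-(1:ℝ)/4) 0,
      h * (4*h+1) * deriv (deriv (deriv g)) h =
        -h * deriv (deriv f) h - 3*h * deriv (deriv g) h := fun h hh => by
    have K : (4*h+1) * deriv (deriv g) h =
        -deriv f h + deriv g h :=
      mul_left_cancel₀ (hne0 h hh) (by
      linear_combination B1 h hh)
    linear_combination (SB2 h hh).2 - K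
  have SA3 := linear_ode_step (-5) (-1) 0 (3/4)
    (fun h hh => (SA2 h hh).1) (fun h hh => (SB2 h hh).1)
    (fun h hh => by linear_combination A2 h hh)
  have SB3 := linear_ode_step (-3) 0 (-1) 0 (fun h hh => (SB2 h hh).1) (fun h hh => (SA2 h hh).1)
    (fun h hh => by linear_combination B2 h hh)
  have A3 : ∀ h ∈ Ioo (-(1:ℝ)/4) 0,
      h * (4*h+1) * deriv (deriv (deriv (deriv f))) h =
        -(9*h+2) * deriv (deriv (deriv f)) h + (7/4) * deriv (deriv (deriv g)) h := fun h hh => by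
    have K : 5 * deriv (deriv f) h =
        -4*h * deriv (deriv (deriv f)) h - deriv (deriv (deriv g)) h :=
      mul_left_cancel₀ (hne h hh) (by
      linear_combination (4*h) * A2 h hh + B2 h hh)
    linear_combination (SA3 h hh).2 - K
  have B3 : ∀ h ∈ Ioo (-(1:ℝ)/4) 0,
      h * (4*h+1) * deriv (deriv (deriv (deriv g))) h =
        -h * deriv (deriv (deriv f)) h - 7*h * deriv (deriv (deriv g)) h := fun h hh => by
    have K : (4*h+1) * deriv (deriv (deriv g)) h =
        -deriv (deriv f) h - 3 * deriv (deriv g) h :=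
      mul_left_cancel₀ (hne0 h hh) (by
      linear_combination B2 h hh)
    linear_combination (SB3 h hh).2 - K
  intro h hh
  simp only [iteratedDeriv_succ, iteratedDeriv_zero]
  exact ⟨A0 h hh, B0 h hh, A1 h hh, B1 h hh, A2 h hh, B2 h hh, A3 h hh, B3 h hh⟩
end

section
/- Define ν(h) = I₂'''(h)/I₀'''(h) for h ∈ (−1/4, 0) (the denominator is positive there). Then ν satisfies the Riccati equation −h·(4h+1)·ν'(h) = (7/4)·ν(h)² − 2(h+1)·ν(h) + h on (−1/4, 0), ν(h) → −1/7 as h → −1/4 from the right, ν(h) → 0 as h → 0 from the left, and ν'(h) > 0 and ν''(h) > 0 for every h ∈ (−1/4, 0). -/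
/-!
With `s = √(1+4h)` and the substitution `x = √(1 + s cos θ)`, the Abelian integral becomes
`I_k = s²/√2 · M_{1,(k-1)/2}(s)`, where `M_{m,b}(s) = ∫₀^π sin^{2m} θ (1 + s cos θ)^b dθ`.
Integration by parts shows that `d/dh` maps `M_{m,b}` to a multiple of `M_{m+1,b-2}`, so
`ν = -(1/7) M_{2,-7/2} / M_{2,-9/2}`, and `ν` and `ν'` are expressed by integrals that are continuous
up to `s = 0`. This gives `ν < 0` and the limits `ν → -1/7` and `ν' → 3/7` at `h = -1/4`
(`tendsto_nuRatio_left`, `tendsto_nuD_left`). Two contiguity relations (`trigM_relA`, `trigM_relB`)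
turn the formula for `ν'` into the Riccati equation (`riccati`).

The rest follows from the equation by one barrier principle (`barrier`): a function with
nonnegative limit at the left endpoint that increases strictly wherever it is `≤ 0` is positive.
Put `q = -h(4h+1) > 0`. The principle applies to
* `ν - h`, so that `h < ν < 0` and `ν → 0` at `h = 0` (`lt_nuRatio`);
* `R = qν'`, the right-hand side of the equation, since
  `R' = 1 - 2ν + ((7/2)ν - 2(h+1))ν'` (`nuD_pos`);
* `E = qν'' = 1 - 2ν + ((7/2)ν + 6h - 1)ν'`, since
  `E' = 4ν' + (7/2)ν'² + ((7/2)ν + 6h - 1)ν''` (`nuE_pos`).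

In the last two cases the limit at `-1/4` is `0`, and the coefficient of the last term is negative.
-/

open Set

/-- The ratio `ν = I₂'''/I₀'''`. -/
noncomputable def nuRatio (h : ℝ) : ℝ :=
  iteratedDeriv 3 (AbI 2) h / iteratedDeriv 3 (AbI 0) h

/-- The trigonometric integral `∫₀^π sin^{2m} θ (1 + s cos θ)^b dθ`. -/
noncomputable def trigM (m : ℕ) (b s : ℝ) : ℝ :=
  ∫ θ in (0:ℝ)..Real.pi, Real.sin θ ^ (2*m) * (1 + s * Real.cos θ) ^ b

lemma one_add_mul_cos_pos {s : ℝ} (hs : |s| < 1) (θ : ℝ) : 0 < 1 + s * Real.cos θ := by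
  have h1 : |s * Real.cos θ| < 1 := by
    rw [abs_mul]
    have := Real.abs_cos_le_one θ
    have := abs_nonneg (Real.cos θ)
    have := abs_nonneg s
    nlinarith
  have := (abs_lt.1 h1).1
  linarith

lemma continuous_one_add_mul_cos_rpow {s : ℝ} (hs : |s| < 1) (b : ℝ) :
    Continuous fun θ : ℝ => (1 + s * Real.cos θ) ^ b :=
  (by fun_prop : Continuous fun θ : ℝ => 1 + s * Real.cos θ).rpow_const
    fun θ => Or.inl (one_add_mul_cos_pos hs θ).ne'

lemma trigM_pos (m : ℕ) (b : ℝ) {s : ℝ} (hs : |s| < 1) : 0 < trigM m b s := by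
  unfold trigM
  refine intervalIntegral.intervalIntegral_pos_of_pos_on ?_ ?_ Real.pi_pos
  · exact ((by fun_prop : Continuous fun θ : ℝ => Real.sin θ ^ (2*m)).mul
      (continuous_one_add_mul_cos_rpow hs b)).intervalIntegrable _ _
  · intro θ hθ
    exact mul_pos (pow_pos (Real.sin_pos_of_pos_of_lt_pi hθ.1 hθ.2) _)
      (Real.rpow_pos_of_pos (one_add_mul_cos_pos hs θ) _)

/-- Differentiation under the integral sign; the integrand of the derivative is dominated by
its maximum over a compact rectangle around `s`. -/
lemma hasDerivAt_integral_rpow (m : ℕ) (b : ℝ) {s : ℝ} (hs : |s| < 1) :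
    HasDerivAt (trigM m b)
      (∫ θ in (0:ℝ)..Real.pi,
        Real.sin θ ^ (2*m) * (b * Real.cos θ * (1 + s * Real.cos θ) ^ (b-1))) s := by
  obtain ⟨r, hr1, hr2⟩ := exists_between hs
  have hK : IsCompact (Icc (-r) r ×ˢ Icc (0:ℝ) Real.pi) := isCompact_Icc.prod isCompact_Icc
  have hlt : ∀ x ∈ Icc (-r) r, |x| < 1 := fun x hx => lt_of_le_of_lt (abs_le.2 hx) hr2
  have hcont : ContinuousOn (fun z : ℝ × ℝ =>
      Real.sin z.2 ^ (2*m) * (b * Real.cos z.2 * (1 + z.1 * Real.cos z.2) ^ (b-1)))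
      (Icc (-r) r ×ˢ Icc (0:ℝ) Real.pi) := by
    have h1 : ContinuousOn (fun z : ℝ × ℝ => (1 + z.1 * Real.cos z.2) ^ (b-1))
        (Icc (-r) r ×ˢ Icc (0:ℝ) Real.pi) :=
      ContinuousOn.rpow_const (by fun_prop)
        fun z hz => Or.inl (one_add_mul_cos_pos (hlt _ hz.1) _).ne'
    fun_prop
  obtain ⟨C, hC⟩ := hK.exists_bound_of_continuousOn hcont
  have hnhds : Ioo (-r) r ∈ nhds s := Ioo_mem_nhds (abs_lt.1 hr1).1 (abs_lt.1 hr1).2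
  have hcs : ∀ x, |x| < 1 → ∀ c : ℝ,
      Continuous fun θ : ℝ => Real.sin θ ^ (2*m) * (1 + x * Real.cos θ) ^ c := fun x hx c =>
    (by fun_prop : Continuous fun θ : ℝ => Real.sin θ ^ (2*m)).mul
      (continuous_one_add_mul_cos_rpow hx c)
  refine (intervalIntegral.hasDerivAt_integral_of_dominated_loc_of_deriv_le
    (F' := fun x θ => Real.sin θ ^ (2*m) * (b * Real.cos θ * (1 + x * Real.cos θ) ^ (b-1)))
    (bound := fun _ => C) hnhds ?_ ?_ ?_ ?_ ?_ ?_).2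
  · filter_upwards [hnhds] with x hx
    exact (hcs x (hlt x (Ioo_subset_Icc_self hx)) b).aestronglyMeasurable
  · exact (hcs s hs b).intervalIntegrable _ _
  · have := continuous_one_add_mul_cos_rpow hs (b-1)
    exact (by fun_prop : Continuous fun θ : ℝ =>
      Real.sin θ ^ (2*m) * (b * Real.cos θ * (1 + s * Real.cos θ) ^ (b-1))).aestronglyMeasurable
  · refine Filter.Eventually.of_forall fun θ hθ x hx => ?_
    rw [uIoc_of_le Real.pi_pos.le] at hθ
    exact hC (x, θ) ⟨Ioo_subset_Icc_self hx, Ioc_subset_Icc_self hθ⟩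
  · exact intervalIntegrable_const
  · refine Filter.Eventually.of_forall fun θ _ x hx => ?_
    have h1 : HasDerivAt (fun x : ℝ => 1 + x * Real.cos θ) (Real.cos θ) x := by
      simpa using ((hasDerivAt_id x).mul_const (Real.cos θ)).const_add 1
    have h2 := (h1.rpow_const (p := b)
      (Or.inl (one_add_mul_cos_pos (hlt x (Ioo_subset_Icc_self hx)) θ).ne')).const_mul
        (Real.sin θ ^ (2*m))
    refine h2.congr_deriv ?_
    ring

lemma hasDerivAt_rpow_theta {s : ℝ} (hs : |s| < 1) (b θ : ℝ) :
    HasDerivAt (fun θ : ℝ => (1 + s * Real.cos θ) ^ b)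
      (-(s * Real.sin θ) * b * (1 + s * Real.cos θ) ^ (b-1)) θ := by
  have h1 : HasDerivAt (fun θ : ℝ => 1 + s * Real.cos θ) (-(s * Real.sin θ)) θ := by
    simpa using ((Real.hasDerivAt_cos θ).const_mul s).const_add 1
  exact h1.rpow_const (Or.inl (one_add_mul_cos_pos hs θ).ne')

/-- Integration by parts, from the vanishing of `sin^{2m+1} θ (1 + s cos θ)^{b-1}` at `0`
and `π`. -/
lemma integral_cos_mul (m : ℕ) (b : ℝ) {s : ℝ} (hs : |s| < 1) :
    (2*m+1) * ∫ θ in (0:ℝ)..Real.pi,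
        Real.sin θ ^ (2*m) * (b * Real.cos θ * (1 + s * Real.cos θ) ^ (b-1))
      = b * (b-1) * s * trigM (m+1) (b-2) s := by
  have c1 := continuous_one_add_mul_cos_rpow hs (b-1)
  have c2 := continuous_one_add_mul_cos_rpow hs (b-2)
  have hd : ∀ θ ∈ uIcc (0:ℝ) Real.pi, HasDerivAt
      (fun θ : ℝ => b * (Real.sin θ ^ (2*m+1) * (1 + s * Real.cos θ) ^ (b-1)))
      ((2*m+1) * (Real.sin θ ^ (2*m) * (b * Real.cos θ * (1 + s * Real.cos θ) ^ (b-1)))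
        - b * (b-1) * s * (Real.sin θ ^ (2*(m+1)) * (1 + s * Real.cos θ) ^ (b-2))) θ := by
    intro θ _
    have h2 := (((Real.hasDerivAt_sin θ).pow (2*m+1)).mul
      (hasDerivAt_rpow_theta hs (b-1) θ)).const_mul b
    refine h2.congr_deriv ?_
    have e : b - 1 - 1 = b - 2 := by ring
    simp only [Pi.pow_apply, e]
    push_cast
    ring
  have key := intervalIntegral.integral_eq_sub_of_hasDerivAt hd
    (by apply Continuous.intervalIntegrable; fun_prop)
  rw [intervalIntegral.integral_sub (by apply Continuous.intervalIntegrable; fun_prop)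
    (by apply Continuous.intervalIntegrable; fun_prop),
    intervalIntegral.integral_const_mul, intervalIntegral.integral_const_mul] at key
  simp only [Real.sin_pi, Real.sin_zero] at key
  unfold trigM
  simp at key
  linarith

/-- In the variable `p = s²` this reads `dM_{m,b}/dp = b(b-1)/(2(2m+1)) M_{m+1,b-2}`: the family is
closed under `d/dp`, with no singularity at `p = 0`. -/
lemma hasDerivAt_trigM (m : ℕ) (b : ℝ) {s : ℝ} (hs : |s| < 1) :
    HasDerivAt (trigM m b) (b * (b-1) / (2*m+1) * s * trigM (m+1) (b-2) s) s := by
  refine (hasDerivAt_integral_rpow m b hs).congr_deriv ?_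
  have h0 : (2*(m:ℝ)+1) ≠ 0 := by positivity
  rw [div_mul_eq_mul_div, div_mul_eq_mul_div, eq_div_iff h0, ← integral_cos_mul m b hs,
    mul_comm]

/-- Writing `s cos θ = W - 1` with `W = 1 + s cos θ` in the derivative of `trigM m b`. -/
lemma mul_integral_cos_mul (m : ℕ) (b : ℝ) {s : ℝ} (hs : |s| < 1) :
    s * ∫ θ in (0:ℝ)..Real.pi,
        Real.sin θ ^ (2*m) * (b * Real.cos θ * (1 + s * Real.cos θ) ^ (b-1))
      = b * (trigM m b s - trigM m (b-1) s) := by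
  have c1 := continuous_one_add_mul_cos_rpow hs (b-1)
  have c2 := continuous_one_add_mul_cos_rpow hs b
  unfold trigM
  rw [← intervalIntegral.integral_sub (by apply Continuous.intervalIntegrable; fun_prop)
    (by apply Continuous.intervalIntegrable; fun_prop), ← intervalIntegral.integral_const_mul,
    ← intervalIntegral.integral_const_mul]
  refine intervalIntegral.integral_congr fun θ _ => ?_
  have hW := one_add_mul_cos_pos hs θ
  have e : (1 + s * Real.cos θ) ^ b = (1 + s * Real.cos θ) ^ (b-1) * (1 + s * Real.cos θ) := by
    rw [← Real.rpow_add_one hW.ne']; congr 1; ring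
  simp only [e]
  ring

/-- The contiguity relation given by the two expressions for the derivative of `trigM m b`. -/
lemma trigM_relA (m : ℕ) (b : ℝ) {s : ℝ} (hs : |s| < 1) :
    b * (b-1) * s^2 * trigM (m+1) (b-2) s
      = (2*m+1) * (b * (trigM m b s - trigM m (b-1) s)) := by
  rw [← mul_integral_cos_mul m b hs]
  linear_combination (-s) * integral_cos_mul m b hs

/-- The relation `s² sin² θ = (s² - 1) + 2W - W²` for `W = 1 + s cos θ`, integrated. -/
lemma trigM_relB (m : ℕ) (b : ℝ) {s : ℝ} (hs : |s| < 1) :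
    s^2 * trigM (m+1) (b-2) s
      = (s^2-1) * trigM m (b-2) s + 2 * trigM m (b-1) s - trigM m b s := by
  have c1 := continuous_one_add_mul_cos_rpow hs (b-1)
  have c2 := continuous_one_add_mul_cos_rpow hs b
  have c3 := continuous_one_add_mul_cos_rpow hs (b-2)
  unfold trigM
  simp only [← intervalIntegral.integral_const_mul]
  rw [← intervalIntegral.integral_add (by apply Continuous.intervalIntegrable; fun_prop)
    (by apply Continuous.intervalIntegrable; fun_prop),
    ← intervalIntegral.integral_sub (by apply Continuous.intervalIntegrable; fun_prop)
    (by apply Continuous.intervalIntegrable; fun_prop)]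
  refine intervalIntegral.integral_congr fun θ _ => ?_
  have hW := one_add_mul_cos_pos hs θ
  have e : (1 + s * Real.cos θ) ^ b = (1 + s * Real.cos θ) ^ (b-1) * (1 + s * Real.cos θ) := by
    rw [← Real.rpow_add_one hW.ne']; congr 1; ring
  have e2 : (1 + s * Real.cos θ) ^ (b-1)
      = (1 + s * Real.cos θ) ^ (b-2) * (1 + s * Real.cos θ) := by
    rw [← Real.rpow_add_one hW.ne']; congr 1; ring
  simp only [e, e2]
  have := Real.sin_sq_add_cos_sq θ
  rw [show 2*(m+1) = 2*m+2 by ring, pow_add, show Real.sin θ ^ 2 = 1 - Real.cos θ ^ 2 by linarith]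
  ring

/-- Integration by parts, from the vanishing of `sin θ cos θ (1 + s cos θ)^a` at `0` and `π`. -/
lemma hasDerivAt_sq_mul_trigM (a : ℝ) {s : ℝ} (hs : |s| < 1) :
    HasDerivAt (fun s => s^2 * trigM 1 a s) (s * trigM 0 a s) s := by
  have h1 := (hasDerivAt_pow 2 s).mul (hasDerivAt_integral_rpow 1 a hs)
  refine h1.congr_deriv ?_
  have c1 := continuous_one_add_mul_cos_rpow hs (a-1)
  have c2 := continuous_one_add_mul_cos_rpow hs a
  have hd : ∀ θ ∈ uIcc (0:ℝ) Real.pi, HasDerivAt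
      (fun θ : ℝ => Real.sin θ * Real.cos θ * (1 + s * Real.cos θ) ^ a)
      (Real.sin θ ^ (2*0) * (1 + s * Real.cos θ) ^ a
        - 2 * (Real.sin θ ^ (2*1) * (1 + s * Real.cos θ) ^ a)
        - s * (Real.sin θ ^ (2*1) * (a * Real.cos θ * (1 + s * Real.cos θ) ^ (a-1)))) θ := by
    intro θ _
    have h2 := ((Real.hasDerivAt_sin θ).mul (Real.hasDerivAt_cos θ)).mul
      (hasDerivAt_rpow_theta hs a θ)
    refine h2.congr_deriv ?_
    have := Real.sin_sq_add_cos_sq θ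
    simp only [Pi.mul_apply]
    linear_combination ((1 + s * Real.cos θ) ^ a) * this
  have key := intervalIntegral.integral_eq_sub_of_hasDerivAt hd
    (by apply Continuous.intervalIntegrable; fun_prop)
  rw [intervalIntegral.integral_sub (by apply Continuous.intervalIntegrable; fun_prop)
    (by apply Continuous.intervalIntegrable; fun_prop),
    intervalIntegral.integral_sub (by apply Continuous.intervalIntegrable; fun_prop)
    (by apply Continuous.intervalIntegrable; fun_prop),
    intervalIntegral.integral_const_mul, intervalIntegral.integral_const_mul] at key
  simp only [Real.sin_pi, Real.sin_zero, zero_mul, sub_zero] at key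
  change trigM 0 a s - 2 * trigM 1 a s - _ = 0 at key
  norm_num
  norm_num at key
  linear_combination (-s) * key

lemma sqrt_mem {h : ℝ} (hh : h ∈ Ioo (-(1:ℝ)/4) 0) :
    0 < √(1+4*h) ∧ √(1+4*h) < 1 ∧ |√(1+4*h)| < 1 ∧ √(1+4*h)^2 = 1+4*h := by
  have h1 : 0 < 1 + 4*h := by linarith [hh.1]
  have h2 : 0 < √(1+4*h) := Real.sqrt_pos.2 h1
  have h3 : √(1+4*h) < 1 := by
    rw [Real.sqrt_lt' one_pos]; linarith [hh.2]
  exact ⟨h2, h3, by rwa [abs_of_pos h2], Real.sq_sqrt h1.le⟩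

lemma hasDerivAt_sqrt_one_add {h : ℝ} (hh : h ∈ Ioo (-(1:ℝ)/4) 0) :
    HasDerivAt (fun h : ℝ => √(1+4*h)) (2 / √(1+4*h)) h := by
  have h1 : 0 < 1 + 4*h := by linarith [hh.1]
  have h2 : HasDerivAt (fun h : ℝ => 1+4*h) 4 h := by
    simpa using ((hasDerivAt_id h).const_mul 4).const_add 1
  refine (h2.sqrt h1.ne').congr_deriv ?_
  have := (sqrt_mem hh).1
  field_simp
  norm_num

/-- The substitution `x = √(1 + s cos θ)`, `s = √(1 + 4h)`. -/
lemma AbI_eq_s8 (k : ℕ) {h : ℝ} (hh : h ∈ Ioo (-(1:ℝ)/4) 0) :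
    AbI k h = (√2)⁻¹ * (√(1+4*h)^2 * trigM 1 (((k:ℝ)-1)/2) √(1+4*h)) := by
  obtain ⟨s0, s1, sa, s2⟩ := sqrt_mem hh
  unfold AbI trigM xminus xplus
  set s := √(1+4*h) with hs
  have c2 := continuous_one_add_mul_cos_rpow sa (1/2-1)
  have hsub := intervalIntegral.integral_comp_mul_deriv''' (a := 0) (b := Real.pi)
    (f := fun θ : ℝ => (1 + s * Real.cos θ)^(1/2:ℝ))
    (f' := fun θ => -(s * Real.sin θ) * (1/2:ℝ) * (1 + s * Real.cos θ) ^ ((1/2:ℝ)-1))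
    (g := fun x => x ^ k * Real.sqrt (2*h + x^2 - x^4/2))
    (continuous_one_add_mul_cos_rpow sa _).continuousOn
    (fun θ _ => (hasDerivAt_rpow_theta sa (1/2) θ).hasDerivWithinAt)
    (by fun_prop)
    ((by fun_prop : Continuous fun x : ℝ => x ^ k * √(2*h + x^2 - x^4/2)).continuousOn.integrableOn_compact
      (isCompact_uIcc.image_of_continuousOn (continuous_one_add_mul_cos_rpow sa _).continuousOn))
    (by
      apply ContinuousOn.integrableOn_compact isCompact_uIcc
      have := continuous_one_add_mul_cos_rpow sa (1/2)
      apply Continuous.continuousOn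
      simp only [Function.comp_def]
      fun_prop)
  simp only [Real.cos_zero, Real.cos_pi, mul_one, mul_neg, ← Real.sqrt_eq_rpow] at hsub
  rw [intervalIntegral.integral_symm, show 1 - s = 1 + -s by ring, ← hsub,
    ← intervalIntegral.integral_neg, ← intervalIntegral.integral_const_mul,
    ← intervalIntegral.integral_const_mul, ← intervalIntegral.integral_const_mul]
  refine intervalIntegral.integral_congr fun θ hθ => ?_
  rw [uIcc_of_le Real.pi_pos.le] at hθ
  have hW := one_add_mul_cos_pos sa θ
  have hsin : 0 ≤ Real.sin θ := Real.sin_nonneg_of_mem_Icc hθ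
  have hrad : 2*h + √(1 + s * Real.cos θ)^2 - √(1 + s * Real.cos θ)^4/2
      = (s * Real.sin θ)^2 / 2 := by
    rw [show √(1 + s * Real.cos θ)^4 = (√(1 + s * Real.cos θ)^2)^2 by ring, Real.sq_sqrt hW.le]
    have := Real.sin_sq_add_cos_sq θ
    linear_combination -s2/2 - s^2/2 * this
  have hpow : √(1 + s * Real.cos θ)^k * (1 + s * Real.cos θ) ^ ((1/2:ℝ)-1)
      = (1 + s * Real.cos θ) ^ (((k:ℝ)-1)/2) := by
    rw [Real.sqrt_eq_rpow, ← Real.rpow_natCast, ← Real.rpow_mul hW.le, ← Real.rpow_add hW]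
    congr 1; ring
  simp only [Function.comp_def, hrad]
  rw [Real.sqrt_div (sq_nonneg _), Real.sqrt_sq (by positivity), ← hpow]
  field_simp

lemma hasDerivAt_trigM_sqrt (m : ℕ) (b : ℝ) {h : ℝ} (hh : h ∈ Ioo (-(1:ℝ)/4) 0) :
    HasDerivAt (fun h => trigM m b √(1+4*h))
      (2 * b * (b-1) / (2*m+1) * trigM (m+1) (b-2) √(1+4*h)) h := by
  obtain ⟨s0, s1, sa, s2⟩ := sqrt_mem hh
  refine ((hasDerivAt_trigM m b sa).comp h (hasDerivAt_sqrt_one_add hh)).congr_deriv ?_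
  field_simp

lemma iteratedDeriv_succ_eqOn {f g g' : ℝ → ℝ} {n : ℕ} {U : Set ℝ} (hU : IsOpen U)
    (hfg : ∀ x ∈ U, iteratedDeriv n f x = g x) (hg : ∀ x ∈ U, HasDerivAt g (g' x) x) :
    ∀ x ∈ U, iteratedDeriv (n+1) f x = g' x := by
  intro x hx
  rw [iteratedDeriv_succ]
  have : iteratedDeriv n f =ᶠ[nhds x] g := by
    filter_upwards [hU.mem_nhds hx] with y hy using hfg y hy
  rw [this.deriv_eq, (hg x hx).deriv]

/-- Successive `h`-derivatives of `AbI k` are multiples of `trigM 0 a`, `trigM 1 (a-2)` and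
`trigM 2 (a-4)`. -/
lemma iteratedDeriv_three_AbI (k : ℕ) {a : ℝ} (ha : a = ((k:ℝ)-1)/2) :
    ∀ h ∈ Ioo (-(1:ℝ)/4) 0, iteratedDeriv 3 (AbI k) h =
      2 * (√2)⁻¹ * (2 * a * (a-1)) * (2 * (a-2) * (a-3) / 3) * trigM 2 (a-4) √(1+4*h) := by
  refine iteratedDeriv_succ_eqOn isOpen_Ioo
    (g := fun h => 2 * (√2)⁻¹ * (2 * a * (a-1)) * trigM 1 (a-2) √(1+4*h))
    (iteratedDeriv_succ_eqOn isOpen_Ioo (g := fun h => 2 * (√2)⁻¹ * trigM 0 a √(1+4*h))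
      (iteratedDeriv_succ_eqOn isOpen_Ioo
        (g := fun h => (√2)⁻¹ * (√(1+4*h)^2 * trigM 1 a √(1+4*h)))
        (fun h hh => ?_) fun h hh => ?_) fun h hh => ?_) fun h hh => ?_
  · rw [iteratedDeriv_zero, AbI_eq_s8 k hh, ha]
  · obtain ⟨s0, s1, sa, s2⟩ := sqrt_mem hh
    refine (((hasDerivAt_sq_mul_trigM a sa).comp h
      (hasDerivAt_sqrt_one_add hh)).const_mul (√2)⁻¹).congr_deriv ?_
    field_simp
  · refine ((hasDerivAt_trigM_sqrt 0 a hh).const_mul (2 * (√2)⁻¹)).congr_deriv ?_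
    norm_num
    ring
  · refine ((hasDerivAt_trigM_sqrt 1 (a-2) hh).const_mul
      (2 * (√2)⁻¹ * (2 * a * (a-1)))).congr_deriv ?_
    norm_num
    rw [show a - 2 - 2 = a - 4 by ring]
    ring

lemma nuRatio_eq {h : ℝ} (hh : h ∈ Ioo (-(1:ℝ)/4) 0) :
    nuRatio h = -(1/7) * (trigM 2 (-(7/2)) √(1+4*h) / trigM 2 (-(9/2)) √(1+4*h)) := by
  obtain ⟨s0, s1, sa, s2⟩ := sqrt_mem hh
  unfold nuRatio
  rw [iteratedDeriv_three_AbI 2 (a := 1/2) (by norm_num) h hh,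
    iteratedDeriv_three_AbI 0 (a := -1/2) (by norm_num) h hh]
  rw [show (1/2:ℝ) - 4 = -(7/2) by norm_num, show (-1/2:ℝ) - 4 = -(9/2) by norm_num]
  have := trigM_pos 2 (-(9/2)) sa
  field_simp
  norm_num
  ring

/-- The derivative `ν'`, written through integrals that stay regular at `s = 0`,
that is, at `h = -1/4`. -/
noncomputable def nuD (s : ℝ) : ℝ :=
  -(1/7) * ((63/10 * trigM 3 (-(11/2)) s * trigM 2 (-(9/2)) s
    - trigM 2 (-(7/2)) s * (99/10 * trigM 3 (-(13/2)) s)) / trigM 2 (-(9/2)) s ^ 2)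

lemma hasDerivAt_nuRatio {h : ℝ} (hh : h ∈ Ioo (-(1:ℝ)/4) 0) :
    HasDerivAt nuRatio (nuD √(1+4*h)) h := by
  obtain ⟨s0, s1, sa, s2⟩ := sqrt_mem hh
  have hX := hasDerivAt_trigM_sqrt 2 (-(7/2)) hh
  have hY := hasDerivAt_trigM_sqrt 2 (-(9/2)) hh
  have h1 := (hX.div hY (trigM_pos 2 _ sa).ne').const_mul (-(1/7:ℝ))
  refine (h1.congr_of_eventuallyEq ?_).congr_deriv ?_
  · filter_upwards [isOpen_Ioo.mem_nhds hh] with x hx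
    exact nuRatio_eq hx
  · unfold nuD
    norm_num

/-- The contiguity relations eliminate every integral except the two whose quotient is `-7ν`. -/
lemma riccati {h : ℝ} (hh : h ∈ Ioo (-(1:ℝ)/4) 0) :
    -h * (4*h+1) * nuD √(1+4*h) = (7/4) * (nuRatio h)^2 - 2*(h+1) * nuRatio h + h := by
  obtain ⟨s0, s1, sa, s2⟩ := sqrt_mem hh
  rw [nuRatio_eq hh]
  unfold nuD
  have hY := trigM_pos 2 (-(9/2)) sa
  have A1 := trigM_relA 2 (-(7/2)) sa
  have A2 := trigM_relA 2 (-(9/2)) sa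
  have B := trigM_relB 2 (-(7/2)) sa
  norm_num at A1 A2 B
  rw [s2] at A1 A2 B
  set X := trigM 2 (-(7/2)) √(1+4*h)
  set Y := trigM 2 (-(9/2)) √(1+4*h)
  set Z := trigM 2 (-(11/2)) √(1+4*h)
  set N := trigM 3 (-(11/2)) √(1+4*h)
  set P := trigM 3 (-(13/2)) √(1+4*h)
  have hN : (1+4*h) * N = 10/9 * (Y - X) := by linarith
  have hP : (1+4*h) * P = 10/11 * (Z - Y) := by linarith
  have hZ : 4*h*Z = -(1/9) * (X + 8 * Y) := by linarith
  field_simp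
  have e1 : h * (4*h+1) * P = 10/11 * (-(1/36) * (X + 8*Y) - h * Y) := by
    linear_combination h * hP + 10/44 * hZ
  have e2 : h * (4*h+1) * N = h * (10/9 * (Y - X)) := by linear_combination h * hN
  linear_combination 252 * Y * e2 - 396 * X * e1

lemma continuousAt_trigM_zero (m : ℕ) (b : ℝ) : ContinuousAt (trigM m b) 0 :=
  (hasDerivAt_trigM m b (by norm_num)).continuousAt

/-- At `s = 0` the integral does not depend on the exponent `b`, which is set to `0` in the
limit. -/
lemma tendsto_trigM (m : ℕ) (b : ℝ) : Filter.Tendsto (fun h : ℝ => trigM m b √(1+4*h))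
    (nhdsWithin (-(1:ℝ)/4) (Ioo (-(1:ℝ)/4) 0)) (nhds (trigM m 0 0)) := by
  have h0 : trigM m 0 0 = trigM m b 0 := by simp [trigM]
  rw [h0]
  refine (continuousAt_trigM_zero m b).tendsto.comp ?_
  have hc : Continuous fun h : ℝ => √(1+4*h) := by fun_prop
  have := hc.tendsto (-(1:ℝ)/4)
  norm_num at this
  norm_num
  exact this.mono_left nhdsWithin_le_nhds

lemma trigM_three_zero : trigM 3 0 0 = 5/6 * trigM 2 0 0 := by
  have := integral_sin_pow (a := 0) (b := Real.pi) 4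
  simp [trigM]
  norm_num at this
  linarith

lemma tendsto_nuRatio_left : Filter.Tendsto nuRatio
    (nhdsWithin (-(1:ℝ)/4) (Ioo (-(1:ℝ)/4) 0)) (nhds (-(1:ℝ)/7)) := by
  have hp : trigM 2 0 0 ≠ 0 := (trigM_pos 2 0 (by norm_num)).ne'
  have h1 := ((tendsto_trigM 2 (-(7/2))).div (tendsto_trigM 2 (-(9/2))) hp).const_mul (-(1/7:ℝ))
  rw [div_self hp, show -(1/7:ℝ) * 1 = -1/7 by norm_num] at h1
  refine h1.congr' ?_
  filter_upwards [self_mem_nhdsWithin] with h hh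
  exact (nuRatio_eq hh).symm

lemma tendsto_nuD_left : Filter.Tendsto (fun h : ℝ => nuD √(1+4*h))
    (nhdsWithin (-(1:ℝ)/4) (Ioo (-(1:ℝ)/4) 0)) (nhds (3/7:ℝ)) := by
  have hp : trigM 2 0 0 ≠ 0 := (trigM_pos 2 0 (by norm_num)).ne'
  have h1 := (((((tendsto_trigM 3 (-(11/2))).const_mul (63/10:ℝ)).mul
    (tendsto_trigM 2 (-(9/2)))).sub ((tendsto_trigM 2 (-(7/2))).mul
      ((tendsto_trigM 3 (-(13/2))).const_mul (99/10:ℝ)))).div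
        ((tendsto_trigM 2 (-(9/2))).pow 2) (pow_ne_zero 2 hp)).const_mul (-(1/7:ℝ))
  rw [trigM_three_zero] at h1
  have e : -(1/7:ℝ) * ((63/10 * (5/6 * trigM 2 0 0) * trigM 2 0 0
      - trigM 2 0 0 * (99/10 * (5/6 * trigM 2 0 0))) / trigM 2 0 0 ^ 2) = 3/7 := by
    field_simp
    norm_num
  rw [e] at h1
  exact h1

/-- Barrier principle: a function with nonnegative limit at the left endpoint that is
strictly increasing wherever it is nonpositive must be positive. -/
lemma barrier {a b L : ℝ} {f f' : ℝ → ℝ} (hd : ∀ x ∈ Ioo a b, HasDerivAt f (f' x) x)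
    (hL : 0 ≤ L) (hlim : Filter.Tendsto f (nhdsWithin a (Ioo a b)) (nhds L))
    (hf : ∀ x ∈ Ioo a b, f x ≤ 0 → 0 < f' x) : ∀ x ∈ Ioo a b, 0 < f x := by
  intro x hx
  by_contra! hx0
  -- A nearby point to the left where `f` is strictly smaller, hence negative.
  obtain ⟨y, hy1, hy2, hy3⟩ : ∃ y, a < y ∧ y < x ∧ f y < f x := by
    have hs := (hasDerivAt_iff_tendsto_slope_left_right.1 (hd x hx)).1
    have h1 := hs.eventually (lt_mem_nhds (hf x hx hx0))
    have h2 : ∀ᶠ y in nhdsWithin x (Iio x), y ∈ Ioo a x := Ioo_mem_nhdsLT hx.1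
    obtain ⟨y, hy, hy'⟩ := (h1.and h2).exists
    refine ⟨y, hy'.1, hy'.2, ?_⟩
    rw [slope_def_field] at hy
    have : f y - f x < 0 := by
      by_contra! hc
      exact absurd hy (not_lt.2 (div_nonpos_of_nonneg_of_nonpos (by linarith)
        (by linarith [hy'.2])))
    linarith
  -- Near the endpoint `f` exceeds `f y`, so the minimum over `[z, x]` is interior.
  obtain ⟨z, hz1, hz2, hz3⟩ : ∃ z, a < z ∧ z < y ∧ f y < f z := by
    have hlim' : Filter.Tendsto f (nhdsWithin a (Ioi a)) (nhds L) := by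
      rwa [nhdsWithin_Ioo_eq_nhdsGT (hx.1.trans hx.2)] at hlim
    have h1 := hlim'.eventually (lt_mem_nhds (show f y < L by linarith))
    have h2 : ∀ᶠ z in nhdsWithin a (Ioi a), z ∈ Ioo a y := Ioo_mem_nhdsGT hy1
    obtain ⟨z, hz, hz'⟩ := (h1.and h2).exists
    exact ⟨z, hz'.1, hz'.2, hz⟩
  have hsub : Icc z x ⊆ Ioo a b := fun t ht => ⟨hz1.trans_le ht.1, ht.2.trans_lt hx.2⟩
  obtain ⟨m, hm, hmin⟩ := isCompact_Icc.exists_isMinOn (nonempty_Icc.2 (hz2.trans hy2).le)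
    (fun t ht => (hd t (hsub ht)).continuousAt.continuousWithinAt : ContinuousOn f (Icc z x))
  have hmy : f m ≤ f y := hmin ⟨hz2.le, hy2.le⟩
  have hmz : z < m := lt_of_le_of_ne hm.1 (by rintro rfl; linarith)
  have hmx : m < x := lt_of_le_of_ne hm.2 (by rintro rfl; linarith)
  have h0 := (hmin.isLocalMin (Icc_mem_nhds hmz hmx)).hasDerivAt_eq_zero (hd m (hsub hm))
  have := hf m (hsub hm) (by linarith)
  linarith

lemma nuRatio_neg {h : ℝ} (hh : h ∈ Ioo (-(1:ℝ)/4) 0) : nuRatio h < 0 := by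
  obtain ⟨s0, s1, sa, s2⟩ := sqrt_mem hh
  rw [nuRatio_eq hh]
  have := div_pos (trigM_pos 2 (-(7/2)) sa) (trigM_pos 2 (-(9/2)) sa)
  linarith

lemma riccati_coeff_pos {h : ℝ} (hh : h ∈ Ioo (-(1:ℝ)/4) 0) : 0 < -h * (4*h+1) :=
  mul_pos (by linarith [hh.2]) (by linarith [hh.1])

lemma tendsto_id_left : Filter.Tendsto (fun h : ℝ => h)
    (nhdsWithin (-(1:ℝ)/4) (Ioo (-(1:ℝ)/4) 0)) (nhds (-(1:ℝ)/4)) :=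
  tendsto_nhdsWithin_of_tendsto_nhds Filter.tendsto_id

/-- The line `ν = h` is a lower barrier, which pins the limit at `0`. -/
lemma lt_nuRatio : ∀ h ∈ Ioo (-(1:ℝ)/4) 0, 0 < nuRatio h - h := by
  refine barrier (f' := fun h => nuD √(1+4*h) - 1) (L := -1/7 - -1/4)
    (fun h hh => (hasDerivAt_nuRatio hh).sub (hasDerivAt_id h)) (by norm_num)
    (tendsto_nuRatio_left.sub tendsto_id_left) fun h hh hz => ?_
  have hR := riccati hh
  have hq := riccati_coeff_pos hh
  have h1 := hh.1
  have h2 := hh.2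
  refine pos_of_mul_pos_right (b := nuD √(1+4*h) - 1) (a := -h * (4*h+1)) ?_ hq.le
  rw [mul_sub, hR]
  nlinarith [mul_nonneg (show 0 ≤ h - nuRatio h by linarith) (show 0 ≤ h + 1 by linarith),
    mul_nonneg (show 0 ≤ h - nuRatio h by linarith) (show 0 ≤ -h - nuRatio h by linarith),
    mul_pos_of_neg_of_neg h2 h2]

lemma hasDerivAt_riccati_rhs {h : ℝ} (hh : h ∈ Ioo (-(1:ℝ)/4) 0) :
    HasDerivAt (fun h => (7/4) * (nuRatio h)^2 - 2*(h+1) * nuRatio h + h)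
      (1 - 2 * nuRatio h + (7/2 * nuRatio h - 2*(h+1)) * nuD √(1+4*h)) h := by
  have hν := hasDerivAt_nuRatio hh
  have h1 := (((hν.pow 2).const_mul (7/4:ℝ)).sub
    ((((hasDerivAt_id h).add_const 1).const_mul 2).mul hν)).add (hasDerivAt_id h)
  refine h1.congr_deriv ?_
  simp
  ring

/-- The right-hand side of the Riccati equation vanishes at `h = -1/4`, and by the differentiated
equation it increases wherever it is nonpositive. -/
lemma nuD_pos : ∀ h ∈ Ioo (-(1:ℝ)/4) 0, 0 < nuD √(1+4*h) := by
  have key : ∀ h ∈ Ioo (-(1:ℝ)/4) 0,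
      0 < (7/4) * (nuRatio h)^2 - 2*(h+1) * nuRatio h + h := by
    refine barrier (L := (7/4) * (-1/7)^2 - 2*(-1/4+1) * (-1/7) + -1/4)
      (fun h hh => hasDerivAt_riccati_rhs hh) (by norm_num)
      ((((tendsto_nuRatio_left.pow 2).const_mul _).sub
        (((tendsto_id_left.add_const 1).const_mul 2).mul tendsto_nuRatio_left)).add
          tendsto_id_left) fun h hh hz => ?_
    have hν := nuRatio_neg hh
    rw [← riccati hh] at hz
    have hD : nuD √(1+4*h) ≤ 0 := nonpos_of_mul_nonpos_right hz (riccati_coeff_pos hh)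
    have : 0 ≤ (7/2 * nuRatio h - 2*(h+1)) * nuD √(1+4*h) :=
      mul_nonneg_of_nonpos_of_nonpos (by linarith [hh.1]) hD
    linarith
  intro h hh
  have := key h hh
  rw [← riccati hh] at this
  exact pos_of_mul_pos_right this (riccati_coeff_pos hh).le

/-- The numerator of `ν''`, obtained by differentiating the Riccati equation once. -/
noncomputable def nuE (h : ℝ) : ℝ :=
  1 - 2 * nuRatio h + (7/2 * nuRatio h + 6*h - 1) * nuD √(1+4*h)

lemma hasDerivAt_nuD {h : ℝ} (hh : h ∈ Ioo (-(1:ℝ)/4) 0) :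
    HasDerivAt (fun h => nuD √(1+4*h)) (nuE h / (-h * (4*h+1))) h := by
  have hq : HasDerivAt (fun h : ℝ => -h * (4*h+1)) (-8*h-1) h := by
    have := (hasDerivAt_id h).neg.mul (((hasDerivAt_id h).const_mul 4).add_const 1)
    refine this.congr_deriv ?_
    simp
    ring
  have hq0 := riccati_coeff_pos hh
  refine (((hasDerivAt_riccati_rhs hh).div hq hq0.ne').congr_of_eventuallyEq ?_).congr_deriv ?_
  · filter_upwards [isOpen_Ioo.mem_nhds hh] with x hx
    exact eq_div_of_mul_eq (riccati_coeff_pos hx).ne' (by rw [mul_comm]; exact riccati hx)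
  · rw [← riccati hh, div_eq_div_iff (pow_pos hq0 2).ne' hq0.ne']
    unfold nuE
    ring

/-- Differentiating the Riccati equation twice makes the numerator of `ν''` a barrier function,
since the inhomogeneous term `4ν' + (7/2)ν'²` is positive. -/
lemma nuE_pos : ∀ h ∈ Ioo (-(1:ℝ)/4) 0, 0 < nuE h := by
  refine barrier (L := 1 - 2 * (-1/7) + (7/2 * (-1/7) + 6*(-1/4) - 1) * (3/7))
    (f' := fun h => -2 * nuD √(1+4*h) + ((7/2 * nuD √(1+4*h) + 6) * nuD √(1+4*h)
      + (7/2 * nuRatio h + 6*h - 1) * (nuE h / (-h * (4*h+1)))))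
    (fun h hh => ?_) (by norm_num)
    (((tendsto_nuRatio_left.const_mul 2).const_sub 1).add
      ((((tendsto_nuRatio_left.const_mul (7/2)).add (tendsto_id_left.const_mul 6)).sub_const
        1).mul tendsto_nuD_left)) fun h hh hz => ?_
  · have hν := hasDerivAt_nuRatio hh
    have h1 := ((hν.const_mul 2).const_sub 1).add
      ((((hν.const_mul (7/2)).add ((hasDerivAt_id h).const_mul 6)).sub_const 1).mul
        (hasDerivAt_nuD hh))
    refine h1.congr_deriv ?_
    simp
  · have hD := nuD_pos h hh
    have : 0 ≤ (7/2 * nuRatio h + 6*h - 1) * (nuE h / (-h * (4*h+1))) :=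
      mul_nonneg_of_nonpos_of_nonpos (by linarith [hh.2, nuRatio_neg hh])
        (div_nonpos_of_nonpos_of_nonneg hz (riccati_coeff_pos hh).le)
    nlinarith [mul_pos hD hD]

/-- `ν` satisfies the Riccati equation `−h(4h+1)ν' = (7/4)ν² − 2(h+1)ν + h` on
`(−1/4,0)`, tends to `−1/7` at `−1/4⁺` and to `0` at `0⁻`, and is strictly
increasing and strictly convex there. -/
theorem nu_riccati :
    (∀ h ∈ Set.Ioo (-(1:ℝ)/4) 0,
      -h * (4*h+1) * deriv nuRatio h = (7/4) * (nuRatio h)^2 - 2*(h+1) * nuRatio h + h ∧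
      0 < deriv nuRatio h ∧ 0 < deriv (deriv nuRatio) h) ∧
    Filter.Tendsto nuRatio (nhdsWithin (-(1:ℝ)/4) (Set.Ioo (-(1:ℝ)/4) 0))
      (nhds (-(1:ℝ)/7)) ∧
    Filter.Tendsto nuRatio (nhdsWithin 0 (Set.Ioo (-(1:ℝ)/4) 0)) (nhds 0) := by
  refine ⟨fun h hh => ?_, tendsto_nuRatio_left, ?_⟩
  · have h2 : deriv nuRatio =ᶠ[nhds h] fun h => nuD √(1+4*h) := by
      filter_upwards [isOpen_Ioo.mem_nhds hh] with x hx
      exact (hasDerivAt_nuRatio hx).deriv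
    rw [h2.deriv_eq, (hasDerivAt_nuD hh).deriv, (hasDerivAt_nuRatio hh).deriv]
    exact ⟨riccati hh, nuD_pos h hh, div_pos (nuE_pos h hh) (riccati_coeff_pos hh)⟩
  · refine tendsto_of_tendsto_of_tendsto_of_le_of_le'
      (tendsto_nhdsWithin_of_tendsto_nhds Filter.tendsto_id) tendsto_const_nhds ?_ ?_
    · filter_upwards [self_mem_nhdsWithin] with h hh
      exact (sub_pos.1 (lt_nuRatio h hh)).le
    · filter_upwards [self_mem_nhdsWithin] with h hh
      exact (nuRatio_neg hh).le
end
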